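/- Let λ be a Dyck word of semilength n. For each node v of its chord forest (a node is either a chord of λ or the formal root), let c_1, …, c_k be the children of v, i.e. the maximal chords nested directly under v (for the root: the outermost chords of λ). Then P_λ = ∏_v [l(c_1)+⋯+l(c_k); l(c_1), …, l(c_k)] in ℤ[q], the product of q-multinomial coefficients taken over all nodes v. -/

import Mathlib

/-!
Dyck words, chords, nesting, capacities and Lascoux–Schützenberger labellings.
A step is a `Bool`: `true` = U (up), `false` = D (down).
-/

open scoped BigOperators Classical

noncomputable section

/-- The height (#U − #D) of the prefix of length `k`. -/
def heightAt (l : List Bool) (k : ℕ) : ℤ :=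
  ((l.take k).count true : ℤ) - ((l.take k).count false : ℤ)

/-- `l` is a Dyck word: equally many U's and D's, and every prefix has at least
as many U's as D's. -/
def IsDyckWord (l : List Bool) : Prop :=
  l.count true = l.count false ∧
    ∀ k, (l.take k).count false ≤ (l.take k).count true

/-- `(i,j)` is a chord of `l` (0-indexed matched pair of a U at `i` and a D at `j`
under the standard parenthesis matching). -/
def IsChord (l : List Bool) (i j : ℕ) : Prop :=
  i < j ∧ j < l.length ∧ l.getD i false = true ∧ l.getD j true = false ∧
    heightAt l (j + 1) = heightAt l i ∧
    ∀ k ∈ Finset.Icc (i + 1) j, heightAt l i < heightAt l k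

/-- The finset of chords of `l`. -/
def chords (l : List Bool) : Finset (ℕ × ℕ) :=
  (Finset.range l.length ×ˢ Finset.range l.length).filter fun p => IsChord l p.1 p.2

/-- `c' = (i',j')` is nested in `c = (i,j)` iff `i < i' < j' < j`. -/
def NestedIn (c' c : ℕ × ℕ) : Prop :=
  c.1 < c'.1 ∧ c'.1 < c'.2 ∧ c'.2 < c.2

/-- The length `l(c)` of a chord: one plus the number of chords nested in it. -/
def chordLen (l : List Bool) (c : ℕ × ℕ) : ℕ :=
  1 + ((chords l).filter fun c' => NestedIn c' c).card

/-- The capacity of a chord: the number of D's strictly before its opening position. -/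
def cap (l : List Bool) (c : ℕ × ℕ) : ℕ := (l.take c.1).count false

/-- LS-labellings of `l`: functions on chords (encoded as functions on `ℕ × ℕ`
vanishing off the chords) which weakly increase under nesting and are bounded by
the capacity on leaf chords. -/
def LSLabellings (l : List Bool) : Set ((ℕ × ℕ) → ℕ) :=
  {f | (∀ c, c ∉ chords l → f c = 0) ∧
       (∀ c ∈ chords l, ∀ c' ∈ chords l, NestedIn c' c → f c ≤ f c') ∧
       (∀ c ∈ chords l, (∀ c' ∈ chords l, ¬ NestedIn c' c) → f c ≤ cap l c)}


/-- The field ℚ(q). -/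
abbrev K : Type := RatFunc ℚ

/-- The variable q. -/
def qq : K := RatFunc.X

/-- The quantum integer [n] = 1 + q + ⋯ + q^{n-1}. -/
def qint (n : ℕ) : K := ∑ i ∈ Finset.range n, qq ^ i

/-- The quantum factorial [n]! = [1][2]⋯[n]. -/
def qfact (n : ℕ) : K := ∏ i ∈ Finset.range n, qint (i + 1)

/-- The Gaussian binomial coefficient [n choose k] = [n]!/([k]!·[n-k]!). -/
def qbinom (n k : ℕ) : K :=
  if k ≤ n then qfact n / (qfact k * qfact (n - k)) else 0

/-- The LS generating polynomial P_λ = Σ_f q^{Σ_c f(c)}, summed over all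
LS-labellings f of λ, viewed in ℚ(q). -/
def PLSK (l : List Bool) : K :=
  ∑ᶠ f ∈ LSLabellings l, qq ^ (∑ c ∈ chords l, f c)

/-- Children of a chord `c` in the chord forest: chords nested in `c` with no
intermediate chord in between. -/
def childrenOf (l : List Bool) (c : ℕ × ℕ) : Finset (ℕ × ℕ) :=
  (chords l).filter fun c' => NestedIn c' c ∧
    ∀ c'' ∈ chords l, ¬ (NestedIn c' c'' ∧ NestedIn c'' c)

/-- Children of the formal root: the outermost chords, nested in no chord. -/
def rootChildren (l : List Bool) : Finset (ℕ × ℕ) :=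
  (chords l).filter fun c' => ∀ c'' ∈ chords l, ¬ NestedIn c' c''

/-- The q-multinomial coefficient [Σ_{c ∈ s} l(c); l(c₁),…,l(c_k)] attached to a
finite set `s` of chords. -/
def qmultiOver (l : List Bool) (s : Finset (ℕ × ℕ)) : K :=
  qfact (∑ c ∈ s, chordLen l c) / ∏ c ∈ s, qfact (chordLen l c)

/-!
Order the chords of `λ` so that nested chords lie above the chords containing them. This is a
finite forest in which the length of a chord is its hook length, the number of elements weakly
above it, and both sides of the theorem equal `[n]! / ∏_c [l(c)]`.

For the product of q-multinomial coefficients this is a telescoping valid in every finite forest: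
the hook lengths of the children of a chord `c` add up to `l(c) - 1`.

For the labellings, every chord contains a leaf chord of the same capacity, so LS-labellings are
the monotone labellings bounded everywhere by the capacity. If `λ = U a D b`, the forest of `λ` is
the forest of `a` with a new root, beside the forest of `b`. The capacities of `b` are shifted by
the size of the first part, which makes the numerators of the two factors telescope; summing over
the label of the new root is a q-hockey-stick identity.
-/

open Finset

section QuantumIntegers

theorem qint_succ_ne_zero (n : ℕ) : qint (n + 1) ≠ 0 := by
  have h_poly : qint (n + 1) =
      algebraMap (Polynomial ℚ) K (∑ i ∈ range (n + 1), Polynomial.X ^ i) := by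
    simp [qint, qq, RatFunc.algebraMap_X]
  rw [h_poly, map_ne_zero_iff _ (RatFunc.algebraMap_injective ℚ)]
  intro h_zero
  have h_eval := congrArg (Polynomial.eval 1) h_zero
  exact Nat.cast_add_one_ne_zero n (by simpa [Polynomial.eval_finsetSum] using h_eval)

theorem qint_add (m n : ℕ) : qint (m + n) = qint m + qq ^ m * qint n := by
  simp [qint, sum_range_add, mul_sum, pow_add]

theorem qfact_zero : qfact 0 = 1 := prod_range_zero _

theorem qfact_succ (n : ℕ) : qfact (n + 1) = qfact n * qint (n + 1) := prod_range_succ _ _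

theorem qfact_ne_zero (n : ℕ) : qfact n ≠ 0 :=
  prod_ne_zero_iff.2 fun i _ => qint_succ_ne_zero i

-- A q-analogue of the hockey-stick identity, multiplied by `[n]!`.
theorem sum_antidiagonal_qfact_add_div_qfact (n d : ℕ) :
    ∑ p ∈ antidiagonal d, qq ^ (p.1 * (n + 1)) * (qfact (p.2 + n) / qfact p.2) =
      qfact (d + n + 1) / (qfact d * qint (n + 1)) := by
  have hn := qint_succ_ne_zero n
  induction d with
  | zero => simp [qfact_zero, qfact_succ, hn]
  | succ d ih =>
    have h_tail : ∑ p ∈ antidiagonal d,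
          qq ^ ((p.1 + 1) * (n + 1)) * (qfact (p.2 + n) / qfact p.2) =
        qq ^ (n + 1) * (qfact (d + n + 1) / (qfact d * qint (n + 1))) := by
      rw [← ih, mul_sum]
      exact sum_congr rfl fun p _ => by ring
    have h_last : qint (d + n + 1 + 1) = qint (n + 1) + qq ^ (n + 1) * qint (d + 1) := by
      rw [← qint_add]
      congr 1
      ring
    have hd := qint_succ_ne_zero d
    have hd' := qfact_ne_zero d
    rw [Nat.sum_antidiagonal_succ, h_tail, show d + 1 + n = d + n + 1 by ring,
      qfact_succ (d + n + 1), h_last, qfact_succ d]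
    field_simp
    ring

/-- The q-multinomial coefficient `[∑ k i]! / ∏ [k i]!` of a family `k` of parts indexed by `s`. -/
def qmultinomial {ι : Type*} (s : Finset ι) (k : ι → ℕ) : K :=
  qfact (∑ i ∈ s, k i) / ∏ i ∈ s, qfact (k i)

end QuantumIntegers

section Forest

variable {X Y : Type*} [Fintype X] [Fintype Y]

@[to_additive]
theorem prod_withBot {M : Type*} [CommMonoid M] (f : WithBot X → M) :
    ∏ v, f v = f ⊥ * ∏ x : X, f x :=
  Fintype.prod_option f

/-- The number of elements weakly above `x`. In the chord forest, where nested chords lie above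
the chords that contain them, this is the length of a chord. -/
def hookLength [LE X] (x : X) : ℕ := #{y | x ≤ y}

theorem hookLength_orderIso [LE X] [LE Y] (e : X ≃o Y) (x : X) :
    hookLength (e x) = hookLength x :=
  (card_equiv e.toEquiv fun y => by simp).symm

theorem hookLength_inl [LE X] [LE Y] (x : X) : hookLength (Sum.inl x : X ⊕ Y) = hookLength x := by
  simp [hookLength, card_filter, -sum_boole]

theorem hookLength_inr [LE X] [LE Y] (y : Y) : hookLength (Sum.inr y : X ⊕ Y) = hookLength y := by
  simp [hookLength, card_filter, -sum_boole]

theorem card_withBot : Fintype.card (WithBot X) = Fintype.card X + 1 := Fintype.card_option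

theorem hookLength_bot [LE X] : hookLength (⊥ : WithBot X) = Fintype.card X + 1 := by
  simp only [hookLength, bot_le, filter_true, card_univ, card_withBot]

theorem hookLength_coe [LE X] (x : X) : hookLength (x : WithBot X) = hookLength x := by
  simp [hookLength, card_filter, sum_withBot, -sum_boole]

/-- The product of the quantum hook lengths, the denominator of the q-hook formula. -/
def qhookProd (X : Type*) [Fintype X] [LE X] : K := ∏ x : X, qint (hookLength x)

theorem qhookProd_orderIso [LE X] [LE Y] (e : X ≃o Y) : qhookProd X = qhookProd Y :=
  Fintype.prod_equiv e.toEquiv _ _ fun x => by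
    simp [← hookLength_orderIso e]

theorem qhookProd_sum [LE X] [LE Y] : qhookProd (X ⊕ Y) = qhookProd X * qhookProd Y := by
  simp [qhookProd, hookLength_inl, hookLength_inr]

theorem qhookProd_withBot [LE X] :
    qhookProd (WithBot X) = qint (Fintype.card X + 1) * qhookProd X := by
  simp [qhookProd, prod_withBot, hookLength_bot, hookLength_coe]

theorem card_lt_add_one [PartialOrder X] (x : X) : #{y | x < y} + 1 = hookLength x := by
  have h_insert : ({y | x ≤ y} : Finset X) = insert x ({y | x < y} : Finset X) := by
    ext y
    simp [le_iff_eq_or_lt, eq_comm]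
  rw [hookLength, h_insert, card_insert_of_notMem (by simp)]

/-- A forest order: the elements below any given one form a chain. -/
def IsForest (X : Type*) [Preorder X] : Prop := ∀ z : X, IsChain (· ≤ ·) (Set.Iic z)

theorem IsForest.withBot {X : Type*} [PartialOrder X] (hX : IsForest X) :
    IsForest (WithBot X) := by
  intro z u hu v hv huv
  induction u with
  | bot => exact .inl bot_le
  | coe x =>
    induction v with
    | bot => exact .inr bot_le
    | coe y =>
      obtain ⟨z, rfl⟩ := WithBot.ne_bot_iff_exists.1 fun hz : z = ⊥ =>
        WithBot.not_coe_le_bot x (hz ▸ hu)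
      simp only [Set.mem_Iic, WithBot.coe_le_coe, ne_eq, WithBot.coe_inj] at hu hv huv ⊢
      exact hX z hu hv huv

theorem IsForest.existsUnique_covBy {X : Type*} [Finite X] [PartialOrder X] (hX : IsForest X)
    (x : X) : ∃! v : WithBot X, v ⋖ (x : WithBot X) := by
  obtain ⟨v, -, hv⟩ := exists_le_covBy_of_lt (WithBot.bot_lt_coe x)
  refine ⟨v, hv, fun u hu => by_contra fun huv => ?_⟩
  rcases hX.withBot x hu.le hv.le huv with h | h
  · exact hu.2 (lt_of_le_of_ne h huv) hv.lt
  · exact hv.2 (lt_of_le_of_ne h (Ne.symm huv)) hu.lt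

/-- The elements covering `v`. The bottom element of `WithBot X` is the formal root, whose
children are the minimal elements of `X`. -/
def children [Preorder X] (v : WithBot X) : Finset X := {x | v ⋖ (x : WithBot X)}

variable [PartialOrder X]

theorem IsForest.prod_prod_children (hX : IsForest X) {M : Type*} [CommMonoid M] (f : X → M) :
    ∏ v : WithBot X, ∏ x ∈ children v, f x = ∏ x, f x := by
  rw [prod_comm' (t' := univ) (s' := fun x : X => {v : WithBot X | v ⋖ (x : WithBot X)})
    (by simp [children])]
  refine prod_congr rfl fun x _ => ?_
  have h_card : #{v : WithBot X | v ⋖ (x : WithBot X)} = 1 := by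
    rw [card_eq_one, singleton_iff_unique_mem]
    simpa using hX.existsUnique_covBy x
  rw [prod_const, h_card, pow_one]

theorem IsForest.sum_hookLength_children (hX : IsForest X) (v : WithBot X) :
    ∑ x ∈ children v, hookLength x = #{x : X | v < x} := by
  have h_union : ({x : X | v < x} : Finset X) =
      (children v).biUnion fun x => {y | x ≤ y} := by
    ext y
    simp only [children, mem_filter, mem_univ, true_and, mem_biUnion]
    constructor
    · intro hvy
      obtain ⟨u, hvu, huy⟩ := exists_covBy_le_of_lt hvy
      obtain ⟨x, rfl⟩ := WithBot.ne_bot_iff_exists.1 (ne_bot_of_gt hvu.lt)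
      exact ⟨x, hvu, WithBot.coe_le_coe.1 huy⟩
    · rintro ⟨x, hvx, hxy⟩
      exact hvx.lt.trans_le (WithBot.coe_le_coe.2 hxy)
  rw [h_union, card_biUnion]
  · rfl
  intro x hx x' hx' hne
  simp only [children, coe_filter, mem_univ, true_and, Set.mem_ofPred_eq] at hx hx'
  refine disjoint_filter.2 fun y _ hxy hxy' => ?_
  rcases hX y hxy hxy' hne with h | h
  · exact hx'.2 hx.lt (WithBot.coe_lt_coe.2 (lt_of_le_of_ne h hne))
  · exact hx.2 hx'.lt (WithBot.coe_lt_coe.2 (lt_of_le_of_ne h hne.symm))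

-- Each `[hookLength x]!` occurs once in a denominator, at the parent of `x`, and each
-- `[hookLength x - 1]!` once in a numerator, at `x` itself.
theorem IsForest.prod_qmultinomial_children (hX : IsForest X) :
    ∏ v : WithBot X, qmultinomial (children v) hookLength =
      qfact (Fintype.card X) / qhookProd X := by
  have h_qfact (x : X) : qfact (hookLength x) = qfact #{y | x < y} * qint (hookLength x) := by
    rw [← card_lt_add_one, qfact_succ]
  have h_ne : ∏ x : X, qfact #{y | x < y} ≠ 0 := prod_ne_zero_iff.2 fun _ _ => qfact_ne_zero _
  simp only [qmultinomial, prod_div_distrib, hX.prod_prod_children, hX.sum_hookLength_children,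
    prod_withBot, WithBot.bot_lt_coe, WithBot.coe_lt_coe, filter_true, card_univ, h_qfact,
    prod_mul_distrib, qhookProd]
  rw [mul_comm (qfact _), mul_div_mul_left _ _ h_ne]

end Forest

section Labellings

theorem monotone_sumElim_iff {X Y Z : Type*} [Preorder X] [Preorder Y] [Preorder Z] {f : X → Z}
    {g : Y → Z} : Monotone (Sum.elim f g) ↔ Monotone f ∧ Monotone g := by
  simp [Monotone]

variable {R X Y : Type*} [CommSemiring R] [Fintype X] [Preorder X] [Fintype Y] [Preorder Y]

/-- The monotone labellings of `X` with all labels at least `lo` and the label of `x` at most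
`κ x`. -/
def boundedLabellings (lo : ℕ) (κ : X → ℕ) : Finset (X → ℕ) :=
  {f ∈ Icc (fun _ => lo) κ | Monotone f}

/-- The generating function of `boundedLabellings lo κ` by the sum of the labels. -/
def labellingGF (q : R) (lo : ℕ) (κ : X → ℕ) : R :=
  ∑ f ∈ boundedLabellings lo κ, q ^ ∑ x, f x

theorem mem_boundedLabellings {lo : ℕ} {κ f : X → ℕ} :
    f ∈ boundedLabellings lo κ ↔ (∀ x, lo ≤ f x ∧ f x ≤ κ x) ∧ Monotone f := by
  simp [boundedLabellings, Pi.le_def, forall_and]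

theorem labellingGF_of_isEmpty [IsEmpty X] (q : R) (lo : ℕ) (κ : X → ℕ) :
    labellingGF q lo κ = 1 := by
  have h_univ : boundedLabellings lo κ = univ :=
    eq_univ_iff_forall.2 fun f => mem_boundedLabellings.2 ⟨isEmptyElim, Subsingleton.monotone f⟩
  simp [labellingGF, h_univ]

theorem labellingGF_orderIso (q : R) (lo : ℕ) (e : X ≃o Y) (κ : Y → ℕ) :
    labellingGF q lo (κ ∘ e) = labellingGF q lo κ := by
  refine sum_equiv (e.toEquiv.arrowCongr (.refl ℕ)) (fun f => ?_) fun f _ => ?_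
  · have h_mono : Monotone (fun y => f (e.symm y)) ↔ Monotone f :=
      ⟨fun h x y hxy => by simpa using h (e.monotone hxy), fun h => h.comp e.symm.monotone⟩
    have h_bounds : (∀ y, lo ≤ f (e.symm y) ∧ f (e.symm y) ≤ κ y) ↔
        ∀ x, lo ≤ f x ∧ f x ≤ κ (e x) := by
      simp [e.surjective.forall]
    simp [mem_boundedLabellings, h_mono, h_bounds, Equiv.arrowCongr, Function.comp_def]
  · exact congrArg (q ^ ·) (Fintype.sum_equiv e.toEquiv _ _ fun x => by simp)

theorem labellingGF_sum (q : R) (lo : ℕ) (κ : X → ℕ) (κ' : Y → ℕ) :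
    labellingGF q lo (Sum.elim κ κ') = labellingGF q lo κ * labellingGF q lo κ' := by
  rw [labellingGF, labellingGF, labellingGF, sum_mul_sum, ← sum_product']
  refine (sum_equiv (Equiv.sumArrowEquivProdArrow X Y ℕ).symm (fun p => ?_) fun p _ => ?_).symm
  · change _ ↔ Sum.elim p.1 p.2 ∈ boundedLabellings lo (Sum.elim κ κ')
    simp only [mem_product, mem_boundedLabellings, monotone_sumElim_iff, Sum.forall, Sum.elim_inl,
      Sum.elim_inr]
    tauto
  · rw [Fintype.sum_sum_type, pow_add]
    rfl

theorem labellingGF_withBot (q : R) (lo m : ℕ) (κ : X → ℕ) :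
    labellingGF q lo (WithBot.recBotCoe m κ) =
      ∑ v ∈ Icc lo m, q ^ v * labellingGF q v κ := by
  simp only [labellingGF, mul_sum]
  rw [sum_sigma']
  refine sum_nbij' (fun f => ⟨f ⊥, fun x => f x⟩) (fun p => WithBot.recBotCoe p.1 p.2)
    (fun f hf => ?_) (fun p hp => ?_) (fun f _ => ?_) (fun p _ => rfl) fun f _ => ?_
  · rw [mem_boundedLabellings, WithBot.monotone_iff, WithBot.forall] at hf
    simp_all [mem_boundedLabellings]
  · rw [mem_sigma, mem_boundedLabellings] at hp
    rw [mem_boundedLabellings, WithBot.monotone_iff, WithBot.forall]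
    simp only [WithBot.recBotCoe_bot, WithBot.recBotCoe_coe]
    grind
  · ext v
    cases v <;> rfl
  · rw [sum_withBot, pow_add]

end Labellings

section HookFormula

theorem sum_Icc_add_left_eq_sum_antidiagonal {M : Type*} [AddCommMonoid M] (f : ℕ → M)
    (m d : ℕ) : ∑ v ∈ Icc m (m + d), f v = ∑ p ∈ antidiagonal d, f (m + p.1) := by
  rw [Nat.sum_antidiagonal_eq_sum_range_succ_mk, ← Ico_add_one_right_eq_Icc, add_assoc,
    sum_Ico_eq_sum_range, add_tsub_cancel_left]
  rfl

variable {X Y : Type*} [Fintype X] [Preorder X] [Fintype Y] [Preorder Y]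

/-- The q-hook formula for labellings of `X` bounded by `κ`, in a form that passes to disjoint
unions and to added roots: shifting the capacities by `d` accounts for the elements to the left,
and the lower bound `lo` for the label of a root below `X`. -/
def SatisfiesHookFormula (κ : X → ℕ) : Prop :=
  ∀ lo d : ℕ, labellingGF qq lo (fun x => lo + d + κ x) =
    qq ^ (lo * Fintype.card X) * (qfact (d + Fintype.card X) / (qfact d * qhookProd X))

theorem SatisfiesHookFormula.of_isEmpty [IsEmpty X] (κ : X → ℕ) : SatisfiesHookFormula κ := by
  intro lo d
  simp [labellingGF_of_isEmpty, qhookProd, qfact_ne_zero]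

theorem SatisfiesHookFormula.orderIso {κ : Y → ℕ} (hκ : SatisfiesHookFormula κ) (e : X ≃o Y) :
    SatisfiesHookFormula (κ ∘ e) := by
  intro lo d
  rw [Fintype.card_congr e.toEquiv, qhookProd_orderIso e, ← hκ]
  exact labellingGF_orderIso qq lo e fun y => lo + d + κ y

theorem SatisfiesHookFormula.sum {κ : X → ℕ} {κ' : Y → ℕ} (hκ : SatisfiesHookFormula κ)
    (hκ' : SatisfiesHookFormula κ') :
    SatisfiesHookFormula (Sum.elim κ fun y => Fintype.card X + κ' y) := by
  intro lo d
  have h_capacity : (fun z => lo + d + Sum.elim κ (fun y => Fintype.card X + κ' y) z) =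
      Sum.elim (fun x => lo + d + κ x) fun y => lo + (d + Fintype.card X) + κ' y := by
    ext (x | y) <;> simp [add_assoc]
  have h_ne := qfact_ne_zero (d + Fintype.card X)
  rw [h_capacity, labellingGF_sum, hκ, hκ', qhookProd_sum, Fintype.card_sum, ← add_assoc]
  field_simp
  ring

theorem SatisfiesHookFormula.withBot {κ : X → ℕ} (hκ : SatisfiesHookFormula κ) :
    SatisfiesHookFormula (WithBot.recBotCoe 0 κ) := by
  intro lo d
  have h_capacity : (fun v => lo + d + WithBot.recBotCoe 0 κ v) =
      WithBot.recBotCoe (lo + d) fun x => lo + d + κ x := by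
    ext v
    cases v <;> rfl
  have h_root (p : ℕ × ℕ) (hp : p ∈ antidiagonal d) :
      qq ^ (lo + p.1) * labellingGF qq (lo + p.1) (fun x => lo + d + κ x) =
        qq ^ (lo * (Fintype.card X + 1)) / qhookProd X * (qq ^ (p.1 * (Fintype.card X + 1)) *
          (qfact (p.2 + Fintype.card X) / qfact p.2)) := by
    rw [← mem_antidiagonal.1 hp, ← add_assoc, hκ]
    field_simp
    ring
  rw [h_capacity, labellingGF_withBot, sum_Icc_add_left_eq_sum_antidiagonal, sum_congr rfl h_root,
    ← mul_sum, sum_antidiagonal_qfact_add_div_qfact, qhookProd_withBot,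
    card_withBot, ← add_assoc]
  field_simp

end HookFormula

section DyckInduction

/-- Mathlib's Dyck steps are the letters of the words considered here. -/
def stepEquiv : DyckStep ≃ Bool where
  toFun s := s = DyckStep.U
  invFun b := if b then DyckStep.U else DyckStep.D
  left_inv s := by cases s <;> simp
  right_inv b := by cases b <;> simp

theorem count_map_stepEquiv_true (w : List DyckStep) :
    (w.map stepEquiv).count true = w.count DyckStep.U :=
  List.count_map_of_injective w stepEquiv stepEquiv.injective DyckStep.U

theorem count_map_stepEquiv_false (w : List DyckStep) :
    (w.map stepEquiv).count false = w.count DyckStep.D :=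
  List.count_map_of_injective w stepEquiv stepEquiv.injective DyckStep.D

theorem isDyckWord_map_stepEquiv_iff {w : List DyckStep} :
    IsDyckWord (w.map stepEquiv) ↔ w.count DyckStep.U = w.count DyckStep.D ∧
      ∀ k, (w.take k).count DyckStep.D ≤ (w.take k).count DyckStep.U := by
  simp only [IsDyckWord, ← List.map_take, count_map_stepEquiv_true, count_map_stepEquiv_false]

@[elab_as_elim]
theorem IsDyckWord.induction_on {P : List Bool → Prop} {l : List Bool} (hl : IsDyckWord l)
    (nil : P []) (nest_append : ∀ a b, IsDyckWord a → IsDyckWord b → P a → P b →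
      P (true :: a ++ false :: b)) : P l := by
  obtain ⟨w, rfl⟩ := (List.map_surjective_iff.2 stepEquiv.surjective) l
  obtain ⟨h_count, h_prefix⟩ := isDyckWord_map_stepEquiv_iff.1 hl
  suffices h_tree : ∀ t, P ((DyckWord.ofTree t).toList.map stepEquiv) by
    simpa only [DyckWord.ofTree_toTree] using h_tree (DyckWord.toTree ⟨w, h_count, h_prefix⟩)
  have h_dyck (p : DyckWord) : IsDyckWord (p.toList.map stepEquiv) :=
    isDyckWord_map_stepEquiv_iff.2 ⟨p.count_U_eq_count_D, p.count_D_le_count_U⟩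
  intro t
  induction t with
  | nil => exact nil
  | node _ s t ihs iht =>
    have h_word : (DyckWord.ofTree (.node () s t)).toList.map stepEquiv =
        true :: (DyckWord.ofTree s).toList.map stepEquiv ++
          false :: (DyckWord.ofTree t).toList.map stepEquiv := by
      simp [DyckWord.ofTree, DyckWord.nest, HAdd.hAdd, Add.add, stepEquiv]
    exact h_word ▸ nest_append _ _ (h_dyck _) (h_dyck _) ihs iht

end DyckInduction

section Chords

variable {l p a b : List Bool} {i j i' j' k : ℕ}

theorem heightAt_zero (l : List Bool) : heightAt l 0 = 0 := by simp [heightAt]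

theorem heightAt_append (l₁ l₂ : List Bool) (k : ℕ) :
    heightAt (l₁ ++ l₂) k = heightAt l₁ k + heightAt l₂ (k - l₁.length) := by
  simp only [heightAt, List.take_append, List.count_append]
  push_cast
  ring

theorem heightAt_cons_succ (x : Bool) (l : List Bool) (k : ℕ) :
    heightAt (x :: l) (k + 1) = (if x then 1 else -1) + heightAt l k := by
  rw [← List.singleton_append, heightAt_append]
  cases x <;> simp [heightAt]

theorem IsDyckWord.heightAt_nonneg (hl : IsDyckWord l) (k : ℕ) : 0 ≤ heightAt l k :=
  sub_nonneg.2 (Nat.cast_le.2 (hl.2 k))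

theorem IsDyckWord.heightAt_length (hl : IsDyckWord l) : heightAt l l.length = 0 := by
  simp [heightAt, hl.1]

theorem isChord_append_left {l₁ l₂ : List Bool} (hj : j < l₁.length) :
    IsChord (l₁ ++ l₂) i j ↔ IsChord l₁ i j := by
  have h_height {k : ℕ} (hk : k ≤ l₁.length) : heightAt (l₁ ++ l₂) k = heightAt l₁ k := by
    rw [heightAt_append, Nat.sub_eq_zero_of_le hk, heightAt_zero, add_zero]
  refine and_congr_right fun hij => and_congr (by rw [List.length_append]; omega) ?_
  rw [List.getD_append _ _ _ _ hj, List.getD_append _ _ _ _ (hij.trans hj), h_height hj,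
    h_height (hij.trans hj).le]
  refine and_congr_right' (and_congr_right' (and_congr_right' (forall₂_congr fun k hk => ?_)))
  rw [h_height ((mem_Icc.1 hk).2.trans hj.le)]

theorem isChord_append_right :
    IsChord (p ++ l) (p.length + i) (p.length + j) ↔ IsChord l i j := by
  have h_height (k : ℕ) :
      heightAt (p ++ l) (p.length + k) = heightAt p p.length + heightAt l k := by
    rw [heightAt_append, Nat.add_sub_cancel_left]
    simp [heightAt, List.take_of_length_le]
  have h_getD (k : ℕ) (x : Bool) : (p ++ l).getD (p.length + k) x = l.getD k x := by
    rw [List.getD_append_right _ _ _ _ (by omega), Nat.add_sub_cancel_left]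
  simp only [IsChord, h_getD, add_assoc, h_height, List.length_append, add_lt_add_iff_left,
    ← map_add_left_Icc, forall_mem_map, addLeftEmbedding_apply, add_right_inj]

theorem IsChord.snd_le_snd (h : IsChord l i j) (h' : IsChord l i' j') (hi : i ≤ i')
    (hi' : i' ≤ j) : j' ≤ j := by
  obtain ⟨-, -, -, -, h_end, h_inside⟩ := h
  obtain ⟨-, -, -, -, -, h_inside'⟩ := h'
  by_contra! hj
  have h_below : heightAt l i' < heightAt l i :=
    h_end ▸ h_inside' (j + 1) (mem_Icc.2 ⟨by omega, hj⟩)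
  rcases hi.eq_or_lt with rfl | hi
  · exact h_below.false
  · exact h_below.asymm (h_inside i' (mem_Icc.2 ⟨hi, hi'⟩))

theorem IsChord.snd_lt_snd (h : IsChord l i j) (h' : IsChord l i' j') (hi : i < i')
    (hi' : i' ≤ j) : j' < j := by
  refine (h.snd_le_snd h' hi.le hi').lt_of_ne ?_
  rintro rfl
  have h_above := h.2.2.2.2.2 i' (mem_Icc.2 ⟨hi, hi'⟩)
  rw [← h.2.2.2.2.1, ← h'.2.2.2.2.1] at h_above
  exact h_above.false

theorem IsChord.snd_unique (h : IsChord l i j) (h' : IsChord l i j') : j = j' :=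
  le_antisymm (h'.snd_le_snd h le_rfl h'.1.le) (h.snd_le_snd h' le_rfl h.1.le)

theorem heightAt_succ (hk : k < l.length) :
    heightAt l (k + 1) = heightAt l k + if l[k] then 1 else -1 := by
  rw [heightAt, heightAt, List.take_succ_eq_append_getElem hk]
  cases l[k] <;> simp [← sub_eq_add_neg, sub_add_eq_sub_sub, add_sub_right_comm]

theorem isChord_succ (hi : i + 1 < l.length) (h_up : l[i] = true) (h_down : l[i + 1] = false) :
    IsChord l i (i + 1) := by
  simp [IsChord, hi, Nat.lt_of_succ_lt hi, h_up, h_down, heightAt_succ]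

-- Among the letters from a U to a later D, the first D closes a leaf chord.
theorem exists_leaf_of_up_of_down {l : List Bool} {i j : ℕ} (hij : i < j) (hj : j < l.length)
    (h_up : l[i] = true) (h_down : l[j] = false) :
    ∃ m, i ≤ m ∧ m < j ∧ IsChord l m (m + 1) ∧
      (l.take m).count false = (l.take i).count false := by
  by_cases h_next : l[i + 1] = false
  · exact ⟨i, le_rfl, hij, isChord_succ _ h_up h_next, rfl⟩
  have h_lt : i + 1 < j :=
    (Nat.succ_le_of_lt hij).lt_of_ne fun h => h_next (by simpa [← h] using h_down)
  obtain ⟨m, him, hmj, hm, h_count⟩ :=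
    exists_leaf_of_up_of_down h_lt hj (by simpa using h_next) h_down
  refine ⟨m, by omega, hmj, hm, h_count.trans ?_⟩
  simp [List.take_succ_eq_append_getElem (hij.trans hj), h_up]
termination_by j - i

theorem IsChord.exists_leaf (h : IsChord l i j) :
    ∃ m, i ≤ m ∧ m < j ∧ IsChord l m (m + 1) ∧
      (l.take m).count false = (l.take i).count false := by
  obtain ⟨hij, hj, h_up, h_down, -⟩ := h
  rw [List.getD_eq_getElem _ _ (hij.trans hj)] at h_up
  rw [List.getD_eq_getElem _ _ hj] at h_down
  exact exists_leaf_of_up_of_down hij hj h_up h_down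

theorem mem_chords {c : ℕ × ℕ} : c ∈ chords l ↔ IsChord l c.1 c.2 := by
  simp only [chords, mem_filter, mem_product, mem_range, and_iff_right_iff_imp]
  exact fun h => ⟨h.1.trans h.2.1, h.2.1⟩

theorem IsDyckWord.isChord_zero_nest_append (ha : IsDyckWord a) (b : List Bool) :
    IsChord (true :: a ++ false :: b) 0 (a.length + 1) := by
  have h_height (k : ℕ) (hk : k ≤ a.length) :
      heightAt (true :: a ++ false :: b) (k + 1) = 1 + heightAt a k := by
    simp [heightAt_append, heightAt_cons_succ, Nat.sub_eq_zero_of_le hk, heightAt_zero]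
  refine ⟨by omega, by simp, rfl, by simp, ?_, fun k hk => ?_⟩
  · rw [heightAt_succ (by simp), h_height _ le_rfl, ha.heightAt_length]
    simp [heightAt_zero]
  · obtain ⟨k, rfl⟩ := Nat.exists_eq_add_of_le' (mem_Icc.1 hk).1
    rw [heightAt_zero, h_height k (by simpa using hk)]
    linarith [ha.heightAt_nonneg k]

theorem isChord_nest_append_left (hj : j < a.length) :
    IsChord (true :: a ++ false :: b) (i + 1) (j + 1) ↔ IsChord a i j := by
  rw [← isChord_append_left hj (l₂ := false :: b), add_comm i, add_comm j]
  exact isChord_append_right (p := [true])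

theorem isChord_nest_append_right :
    IsChord (true :: a ++ false :: b) (a.length + 2 + i) (a.length + 2 + j) ↔ IsChord b i j := by
  simpa using isChord_append_right (p := true :: a ++ [false]) (l := b) (i := i) (j := j)

theorem IsDyckWord.isChord_nest_append_iff (ha : IsDyckWord a) :
    IsChord (true :: a ++ false :: b) i j ↔ (i = 0 ∧ j = a.length + 1) ∨
      (∃ i' j', IsChord a i' j' ∧ i = i' + 1 ∧ j = j' + 1) ∨
      ∃ i' j', IsChord b i' j' ∧ i = a.length + 2 + i' ∧ j = a.length + 2 + j' := by
  have h_outer := ha.isChord_zero_nest_append b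
  constructor
  · intro h
    obtain rfl | h_pos := i.eq_zero_or_pos
    · exact .inl ⟨rfl, h.snd_unique h_outer⟩
    obtain h_inside | (h_outside : a.length + 2 ≤ i) := le_or_gt i (a.length + 1)
    · have hj := h_outer.snd_lt_snd h h_pos h_inside
      obtain ⟨i, rfl⟩ := Nat.exists_eq_add_of_le' h_pos
      obtain ⟨j, rfl⟩ := Nat.exists_eq_add_of_le' (h_pos.trans h.1)
      exact .inr (.inl ⟨i, j, (isChord_nest_append_left (by omega)).1 h, rfl, rfl⟩)
    · obtain ⟨i, rfl⟩ := Nat.exists_eq_add_of_le h_outside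
      obtain ⟨j, rfl⟩ := Nat.exists_eq_add_of_le (h_outside.trans h.1.le)
      exact .inr (.inr ⟨i, j, isChord_nest_append_right.1 h, rfl, rfl⟩)
  · rintro (⟨rfl, rfl⟩ | ⟨i, j, h, rfl, rfl⟩ | ⟨i, j, h, rfl, rfl⟩)
    · exact h_outer
    · exact (isChord_nest_append_left h.2.1).2 h
    · exact isChord_nest_append_right.2 h

end Chords

section ChordForest

/-- The chord forest of `l`, ordered so that the chords nested in a chord lie above it. The order
is not the one that a subtype of `ℕ × ℕ` would inherit. -/
def ChordForest (l : List Bool) : Type := {c : ℕ × ℕ // c ∈ chords l}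

namespace ChordForest

variable {l a b : List Bool}

instance : Fintype (ChordForest l) := inferInstanceAs (Fintype {c : ℕ × ℕ // c ∈ chords l})

instance : PartialOrder (ChordForest l) :=
  PartialOrder.lift (fun c => (c.1.1, OrderDual.toDual c.1.2)) fun _ _ h =>
    Subtype.ext (Prod.ext (congrArg Prod.fst h) (congrArg Prod.snd h))

theorem le_iff {c c' : ChordForest l} : c ≤ c' ↔ c.1.1 ≤ c'.1.1 ∧ c'.1.2 ≤ c.1.2 := Iff.rfl

theorem isChord (c : ChordForest l) : IsChord l c.1.1 c.1.2 := mem_chords.1 c.2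

theorem lt_iff_nestedIn {c c' : ChordForest l} : c < c' ↔ NestedIn c'.1 c.1 := by
  have h_unique (h : c.1.1 = c'.1.1) : c.1.2 = c'.1.2 :=
    c.isChord.snd_unique (h ▸ c'.isChord)
  have h_snd (h : c.1.1 < c'.1.1) (h' : c'.1.1 ≤ c.1.2) : c'.1.2 < c.1.2 :=
    c.isChord.snd_lt_snd c'.isChord h h'
  have h_order := c'.isChord.1
  rw [lt_iff_le_not_ge, le_iff, le_iff, NestedIn]
  omega

theorem isForest (l : List Bool) : IsForest (ChordForest l) := by
  have h_le {c c' z : ChordForest l} (hc : c ≤ z) (hc' : c' ≤ z) (h : c.1.1 ≤ c'.1.1) : c ≤ c' := by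
    refine ⟨h, c.isChord.snd_le_snd c'.isChord h ?_⟩
    have h_order := z.isChord.1
    rw [le_iff] at hc hc'
    omega
  intro z c hc c' hc' _
  exact (le_total c.1.1 c'.1.1).imp (h_le hc hc') (h_le hc' hc)

theorem exists_isMax_cap_eq (c : ChordForest l) :
    ∃ c' : ChordForest l, c ≤ c' ∧ IsMax c' ∧ cap l c'.1 = cap l c.1 := by
  obtain ⟨m, h_fst, h_snd, h_leaf, h_cap⟩ := c.isChord.exists_leaf
  refine ⟨⟨(m, m + 1), mem_chords.2 h_leaf⟩, ⟨h_fst, h_snd⟩, fun c' hc' => ?_, h_cap⟩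
  obtain ⟨h_fst', h_snd'⟩ : m ≤ c'.1.1 ∧ c'.1.2 ≤ m + 1 := hc'
  have h_order := c'.isChord.1
  exact ⟨show c'.1.1 ≤ m by omega, show m + 1 ≤ c'.1.2 by omega⟩

/-- The positions of the chords of `U a D b`: the outermost chord, the chords of `a` nested in it,
and the chords of `b`. -/
def nestAppendPos (a b : List Bool) : WithBot (ChordForest a) ⊕ ChordForest b → ℕ × ℕ :=
  Sum.elim (WithBot.recBotCoe (0, a.length + 1) fun c => (c.1.1 + 1, c.1.2 + 1))
    fun c => (a.length + 2 + c.1.1, a.length + 2 + c.1.2)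

theorem exists_nestAppendPos_eq_iff (ha : IsDyckWord a) {c : ℕ × ℕ} :
    (∃ v, nestAppendPos a b v = c) ↔ c ∈ chords (true :: a ++ false :: b) := by
  rw [mem_chords, ha.isChord_nest_append_iff]
  simp only [Sum.exists, WithBot.exists, nestAppendPos, Sum.elim_inl, Sum.elim_inr,
    WithBot.recBotCoe_bot, WithBot.recBotCoe_coe]
  constructor
  · rintro ((h | ⟨c', h⟩) | ⟨c', h⟩)
    · exact .inl (Prod.ext_iff.1 h.symm)
    · exact .inr (.inl ⟨_, _, c'.isChord, Prod.ext_iff.1 h.symm⟩)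
    · exact .inr (.inr ⟨_, _, c'.isChord, Prod.ext_iff.1 h.symm⟩)
  · rintro (h | ⟨i, j, h_chord, h⟩ | ⟨i, j, h_chord, h⟩)
    · exact .inl (.inl (Prod.ext_iff.2 h).symm)
    · exact .inl (.inr ⟨⟨(i, j), mem_chords.2 h_chord⟩, (Prod.ext_iff.2 h).symm⟩)
    · exact .inr ⟨⟨(i, j), mem_chords.2 h_chord⟩, (Prod.ext_iff.2 h).symm⟩

theorem nestAppendPos_le_iff {u v : WithBot (ChordForest a) ⊕ ChordForest b} :
    (nestAppendPos a b u).1 ≤ (nestAppendPos a b v).1 ∧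
      (nestAppendPos a b v).2 ≤ (nestAppendPos a b u).2 ↔ u ≤ v := by
  have h_bounds (l : List Bool) (c : ChordForest l) : c.1.1 < c.1.2 ∧ c.1.2 < l.length :=
    ⟨c.isChord.1, c.isChord.2.1⟩
  revert u v
  simp only [Sum.forall, WithBot.forall, nestAppendPos, Sum.elim_inl, Sum.elim_inr,
    WithBot.recBotCoe_bot, WithBot.recBotCoe_coe, Sum.inl_le_inl_iff, Sum.inr_le_inr_iff,
    Sum.not_inl_le_inr, Sum.not_inr_le_inl, WithBot.coe_le_coe, bot_le,
    WithBot.not_coe_le_bot, le_iff]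
  grind

/-- The chord forest of `U a D b` is that of `a` with a new root, beside that of `b`. -/
def nestAppendOrderIso (ha : IsDyckWord a) (b : List Bool) :
    WithBot (ChordForest a) ⊕ ChordForest b ≃o ChordForest (true :: a ++ false :: b) :=
  RelIso.ofSurjective
    (OrderEmbedding.ofMapLEIff
      (fun v => ⟨nestAppendPos a b v, (exists_nestAppendPos_eq_iff ha).1 ⟨v, rfl⟩⟩)
      fun _ _ => nestAppendPos_le_iff)
    fun c => ((exists_nestAppendPos_eq_iff ha).2 c.2).imp fun _ => Subtype.ext

instance : IsEmpty (ChordForest []) := ⟨fun c => by simpa using c.isChord.2.1⟩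

theorem card_eq_count_false (hl : IsDyckWord l) :
    Fintype.card (ChordForest l) = l.count false := by
  refine hl.induction_on (by simp) fun a b ha _ iha ihb => ?_
  rw [← Fintype.card_congr (nestAppendOrderIso ha b).toEquiv, Fintype.card_sum, card_withBot, iha,
    ihb]
  simp [add_assoc, add_comm 1]

theorem cap_nestAppendOrderIso (ha : IsDyckWord a) (b : List Bool)
    (v : WithBot (ChordForest a) ⊕ ChordForest b) :
    cap (true :: a ++ false :: b) (nestAppendOrderIso ha b v).1 =
      Sum.elim (WithBot.recBotCoe 0 fun c => cap a c.1)
        (fun c => Fintype.card (WithBot (ChordForest a)) + cap b c.1) v := by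
  change cap _ (nestAppendPos a b v) = _
  revert v
  simp only [Sum.forall, WithBot.forall, nestAppendPos, Sum.elim_inl, Sum.elim_inr,
    WithBot.recBotCoe_bot, WithBot.recBotCoe_coe, cap]
  refine ⟨⟨by simp, fun c => ?_⟩, fun c => ?_⟩
  · have h_lt : c.1.1 < a.length := c.isChord.1.trans c.isChord.2.1
    simp [List.take_append_of_le_length h_lt.le]
  · rw [card_withBot, card_eq_count_false ha]
    have h_split : true :: a ++ false :: b = (true :: a ++ [false]) ++ b := by simp
    have h_index : a.length + 2 + c.1.1 = (true :: a ++ [false]).length + c.1.1 := by simp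
    rw [h_split, h_index, List.take_length_add_append]
    simp [add_assoc, add_comm 1]

theorem satisfiesHookFormula_cap (hl : IsDyckWord l) :
    SatisfiesHookFormula fun c : ChordForest l => cap l c.1 := by
  refine hl.induction_on (.of_isEmpty _) fun a b ha _ iha ihb => ?_
  have h := (iha.withBot.sum ihb).orderIso (nestAppendOrderIso ha b).symm
  refine (congrArg SatisfiesHookFormula (funext fun c => ?_)).mp h
  rw [Function.comp_apply, ← cap_nestAppendOrderIso ha b, OrderIso.apply_symm_apply]

/-- The inclusion of the chord forest into the pairs of positions. -/
def val : ChordForest l ↪ ℕ × ℕ := Function.Embedding.subtype _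

theorem map_val_filter {P : ChordForest l → Prop} {Q : ℕ × ℕ → Prop} [DecidablePred P]
    [DecidablePred Q] (hPQ : ∀ c, P c ↔ Q c.1) : (univ.filter P).map val = (chords l).filter Q := by
  ext c
  simp only [mem_map, mem_filter, mem_univ, true_and, hPQ]
  exact ⟨by rintro ⟨c, hc, rfl⟩; exact ⟨c.2, hc⟩, fun ⟨hc, hP⟩ => ⟨⟨c, hc⟩, hP, rfl⟩⟩

theorem hookLength_eq_chordLen (c : ChordForest l) : hookLength c = chordLen l c.1 := by
  rw [← card_lt_add_one, chordLen, add_comm, ← map_val_filter fun _ => lt_iff_nestedIn, card_map]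

theorem isMin_iff {c : ChordForest l} : IsMin c ↔ ∀ c' ∈ chords l, ¬ NestedIn c.1 c' := by
  simp only [isMin_iff_forall_not_lt, lt_iff_nestedIn]
  exact Subtype.forall

theorem isMax_iff {c : ChordForest l} : IsMax c ↔ ∀ c' ∈ chords l, ¬ NestedIn c' c.1 := by
  simp only [isMax_iff_forall_not_lt, lt_iff_nestedIn]
  exact Subtype.forall

theorem covBy_iff {c c' : ChordForest l} : c ⋖ c' ↔
    NestedIn c'.1 c.1 ∧ ∀ d ∈ chords l, ¬(NestedIn c'.1 d ∧ NestedIn d c.1) := by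
  simp only [CovBy, lt_iff_nestedIn]
  refine and_congr_right' ⟨fun h d hd hn => ?_, fun h d hd hd' => h d.1 d.2 ⟨hd', hd⟩⟩
  exact h (c := ⟨d, hd⟩) hn.2 hn.1

theorem map_val_children_bot (l : List Bool) :
    (children (⊥ : WithBot (ChordForest l))).map val = rootChildren l :=
  map_val_filter fun _ => WithBot.bot_covBy_coe.trans isMin_iff

theorem map_val_children_coe (c : ChordForest l) :
    (children (c : WithBot (ChordForest l))).map val = childrenOf l c.1 :=
  map_val_filter fun _ => WithBot.coe_covBy_coe.trans covBy_iff

theorem qmultiOver_map_val (s : Finset (ChordForest l)) :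
    qmultiOver l (s.map val) = qmultinomial s hookLength := by
  simp only [qmultiOver, qmultinomial, sum_map, prod_map, hookLength_eq_chordLen]
  rfl

theorem prod_qmultinomial_children (l : List Bool) :
    ∏ v : WithBot (ChordForest l), qmultinomial (children v) hookLength =
      qmultiOver l (rootChildren l) * ∏ c ∈ chords l, qmultiOver l (childrenOf l c) := by
  simp only [prod_withBot, ← qmultiOver_map_val, map_val_children_bot, map_val_children_coe]
  exact congrArg _ (prod_coe_sort (chords l) fun c => qmultiOver l (childrenOf l c))

theorem mem_LSLabellings_iff {f : ℕ × ℕ → ℕ} : f ∈ LSLabellings l ↔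
    (∀ c ∉ chords l, f c = 0) ∧
      (fun c : ChordForest l => f c.1) ∈ boundedLabellings 0 fun c => cap l c.1 := by
  have h_mono : Monotone (fun c : ChordForest l => f c.1) ↔
      ∀ c ∈ chords l, ∀ c' ∈ chords l, NestedIn c' c → f c ≤ f c' := by
    simp only [monotone_iff_forall_lt, lt_iff_nestedIn]
    exact ⟨fun h c hc c' hc' => @h ⟨c, hc⟩ ⟨c', hc'⟩, fun h c c' => h c.1 c.2 c'.1 c'.2⟩
  have h_leaf (hf : Monotone fun c : ChordForest l => f c.1) :
      (∀ c : ChordForest l, f c.1 ≤ cap l c.1) ↔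
        ∀ c ∈ chords l, (∀ c' ∈ chords l, ¬ NestedIn c' c) → f c ≤ cap l c := by
    refine ⟨fun h c hc _ => h ⟨c, hc⟩, fun h c => ?_⟩
    obtain ⟨c', hcc', h_max, h_cap⟩ := c.exists_isMax_cap_eq
    exact (hf hcc').trans ((h c'.1 c'.2 (isMax_iff.1 h_max)).trans h_cap.le)
  simp only [LSLabellings, Set.mem_ofPred_eq, mem_boundedLabellings, zero_le, true_and, ← h_mono]
  exact and_congr_right' (and_comm.trans (and_congr_left fun hf => (h_leaf hf).symm))

theorem PLSK_eq_labellingGF (l : List Bool) :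
    PLSK l = labellingGF qq 0 fun c : ChordForest l => cap l c.1 := by
  rw [labellingGF, ← finsum_mem_coe_finset, PLSK]
  refine finsum_mem_eq_of_bijOn (fun f c => f c.1) ⟨?_, ?_, ?_⟩ fun f _ =>
    congrArg (qq ^ ·) (sum_coe_sort (chords l) f).symm
  · exact fun f hf => (mem_LSLabellings_iff.1 hf).2
  · intro f hf g hg hfg
    funext c
    by_cases hc : c ∈ chords l
    · exact congrFun hfg ⟨c, hc⟩
    · rw [(mem_LSLabellings_iff.1 hf).1 c hc, (mem_LSLabellings_iff.1 hg).1 c hc]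
  · intro f hf
    have h_restrict : (fun c : ChordForest l => Function.extend val f 0 c.1) = f :=
      funext (val.injective.extend_apply f 0)
    refine ⟨Function.extend val f 0, mem_LSLabellings_iff.2 ⟨fun c hc => ?_, ?_⟩, h_restrict⟩
    · exact Function.extend_apply' _ _ _ fun ⟨c', h⟩ => hc (h ▸ c'.2)
    · rwa [h_restrict]

end ChordForest

end ChordForest

/-- Paper's Theorem `Dyck-fac`: the factorized product formula
P_λ = ∏_v [l(c₁)+⋯+l(c_k); l(c₁),…,l(c_k)] over all nodes v of the chord forest
(the formal root together with every chord). -/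
theorem stmt_11 (n : ℕ) (l : List Bool) (hd : IsDyckWord l) (hlen : l.length = 2 * n) :
    PLSK l =
      qmultiOver l (rootChildren l) * ∏ c ∈ chords l, qmultiOver l (childrenOf l c) := by
  have h_hook : labellingGF qq 0 (fun c : ChordForest l => cap l c.1) =
      qfact (Fintype.card (ChordForest l)) / qhookProd (ChordForest l) := by
    simpa [qfact_zero] using ChordForest.satisfiesHookFormula_cap hd 0 0
  calc
    PLSK l = labellingGF qq 0 fun c : ChordForest l => cap l c.1 :=
      ChordForest.PLSK_eq_labellingGF l
    _ = qfact (Fintype.card (ChordForest l)) / qhookProd (ChordForest l) := h_hook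
    _ = ∏ v : WithBot (ChordForest l), qmultinomial (children v) hookLength :=
      (ChordForest.isForest l).prod_qmultinomial_children.symm
    _ = qmultiOver l (rootChildren l) * ∏ c ∈ chords l, qmultiOver l (childrenOf l c) :=
      ChordForest.prod_qmultinomial_children l
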